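/- arXiv:2407.10602 — 2 statements merged into one kernel-verified Lean document; each statement's English description precedes it below -/
import Mathlib

section
/- Define g : (−π/4, π/4) → ℝ by g(ψ) = sin(2ψ) · ln(tan(ψ + π/4)). Then: (i) g is even, i.e. g(−ψ) = g(ψ) for all ψ ∈ (−π/4, π/4); (ii) g(0) = 0 and g is strictly increasing on [0, π/4); (iii) g(ψ) → +∞ as ψ → π/4⁻. Consequently there exists a unique ψ₀ ∈ (0, π/4) such that sin(2ψ₀) · ln(tan(ψ₀ + π/4)) = 1. -/
open Real Filter Topology

/-- The function `g(ψ) = sin(2ψ) ln(tan(ψ + π/4))` on `(−π/4, π/4)`: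
(i) `g` is even; (ii) `g(0) = 0` and `g` is strictly increasing on `[0, π/4)`;
(iii) `g(ψ) → +∞` as `ψ → π/4⁻`. Consequently there is a unique `ψ₀ ∈ (0, π/4)` with
`sin(2ψ₀) ln(tan(ψ₀ + π/4)) = 1`. -/
theorem g_even_mono_unique_root (g : ℝ → ℝ)
    (hg : ∀ ψ, g ψ = Real.sin (2 * ψ) * Real.log (Real.tan (ψ + π / 4))) :
    (∀ ψ ∈ Set.Ioo (-(π / 4)) (π / 4), g (-ψ) = g ψ) ∧
    g 0 = 0 ∧
    StrictMonoOn g (Set.Ico 0 (π / 4)) ∧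
    Tendsto g (𝓝[<] (π / 4)) atTop ∧
    (∃! ψ₀ : ℝ, ψ₀ ∈ Set.Ioo 0 (π / 4) ∧ g ψ₀ = 1) := by
  have hpi := Real.pi_pos
  have h0 : g 0 = 0 := by rw [hg]; simp
  have hmono : StrictMonoOn g (Set.Ico 0 (π / 4)) := by
    intro a ha b hb hab
    obtain ⟨ha0, ha1⟩ := ha
    obtain ⟨hb0, hb1⟩ := hb
    rw [hg, hg]
    have hs : Real.sin (2 * a) < Real.sin (2 * b) :=
      Real.sin_lt_sin_of_lt_of_le_pi_div_two (by linarith) (by linarith) (by linarith)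
    have hs0 : 0 ≤ Real.sin (2 * a) :=
      Real.sin_nonneg_of_nonneg_of_le_pi (by linarith) (by linarith)
    have ht1 : 1 ≤ Real.tan (a + π / 4) := by
      rcases ha0.eq_or_lt with h | h
      · rw [← h, zero_add, Real.tan_pi_div_four]
      · rw [← Real.tan_pi_div_four]
        exact (Real.tan_lt_tan_of_lt_of_lt_pi_div_two (by linarith) (by linarith)
          (by linarith)).le
    have ht : Real.tan (a + π / 4) < Real.tan (b + π / 4) :=
      Real.tan_lt_tan_of_lt_of_lt_pi_div_two (by linarith) (by linarith) (by linarith)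
    exact mul_lt_mul'' hs (Real.log_lt_log (by linarith) ht) hs0 (Real.log_nonneg ht1)
  have hlim : Tendsto g (𝓝[<] (π / 4)) atTop := by
    have hgf : g = fun ψ => Real.sin (2 * ψ) * Real.log (Real.tan (ψ + π / 4)) := funext hg
    rw [hgf]
    have hsin : Tendsto (fun ψ : ℝ => Real.sin (2 * ψ)) (𝓝[<] (π / 4)) (𝓝 1) := by
      have hc : Continuous (fun ψ : ℝ => Real.sin (2 * ψ)) := by fun_prop
      have h := hc.tendsto (π / 4)
      have e : Real.sin (2 * (π / 4)) = 1 := by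
        rw [show 2 * (π / 4) = π / 2 by ring, Real.sin_pi_div_two]
      simp only [e] at h
      exact h.mono_left nhdsWithin_le_nhds
    have hadd : Tendsto (fun ψ : ℝ => ψ + π / 4) (𝓝[<] (π / 4)) (𝓝[<] (π / 2)) := by
      refine tendsto_nhdsWithin_iff.2 ⟨?_, ?_⟩
      · have hc : Continuous (fun ψ : ℝ => ψ + π / 4) := by fun_prop
        have h := hc.tendsto (π / 4)
        simp only [show π / 4 + π / 4 = π / 2 by ring] at h
        exact h.mono_left nhdsWithin_le_nhds
      · filter_upwards [self_mem_nhdsWithin] with x hx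
        simp only [Set.mem_Iio] at hx ⊢
        linarith
    exact hsin.pos_mul_atTop one_pos
      (Real.tendsto_log_atTop.comp (Real.tendsto_tan_pi_div_two.comp hadd))
  refine ⟨?_, h0, hmono, hlim, ?_⟩
  · intro ψ _
    rw [hg, hg, show -ψ + π / 4 = π / 2 - (ψ + π / 4) by ring, Real.tan_pi_div_two_sub,
      Real.log_inv, show 2 * -ψ = -(2 * ψ) by ring, Real.sin_neg]
    ring
  · have hev : ∀ᶠ x in 𝓝[<] (π / 4), 1 < g x ∧ x ∈ Set.Ioo 0 (π / 4) :=
      (hlim.eventually_gt_atTop 1).and (Ioo_mem_nhdsLT (by linarith))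
    obtain ⟨c, hc1, hc0, hc4⟩ := hev.exists
    have hcont : ContinuousOn g (Set.Icc 0 c) := by
      intro x hx
      obtain ⟨hx0, hx1⟩ := hx
      have hcos : 0 < Real.cos (x + π / 4) :=
        Real.cos_pos_of_mem_Ioo ⟨by linarith, by linarith⟩
      have htan : 0 < Real.tan (x + π / 4) :=
        Real.tan_pos_of_pos_of_lt_pi_div_two (by linarith) (by linarith)
      have hgf : g = fun ψ => Real.sin (2 * ψ) * Real.log (Real.tan (ψ + π / 4)) := funext hg
      rw [hgf]
      have h1 : ContinuousAt (fun ψ : ℝ => Real.tan (ψ + π / 4)) x :=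
        ContinuousAt.comp (f := fun ψ : ℝ => ψ + π / 4) (g := Real.tan)
          (Real.continuousAt_tan.2 hcos.ne') (by fun_prop)
      have h2 : ContinuousAt (fun ψ : ℝ => Real.sin (2 * ψ)) x := by fun_prop
      exact (h2.mul (h1.log htan.ne')).continuousWithinAt
    obtain ⟨x, ⟨hx0, hx1⟩, hx⟩ := intermediate_value_Icc hc0.le hcont
      (show (1 : ℝ) ∈ Set.Icc (g 0) (g c) from ⟨by rw [h0]; exact zero_le_one, hc1.le⟩)
    have hxne : 0 ≠ x := by
      rintro rfl
      rw [h0] at hx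
      exact zero_ne_one hx
    refine ⟨x, ⟨⟨lt_of_le_of_ne hx0 hxne, by linarith⟩, hx⟩, ?_⟩
    rintro y ⟨⟨hy0, hy1⟩, hy⟩
    exact hmono.injOn ⟨hy0.le, hy1⟩ ⟨hx0, by linarith⟩ (hy.trans hx.symm)
end

section
/- Define H₀ : (−π/4, π/4) → ℝ by H₀(ψ) = 4 cos(2ψ) · ln(tan(ψ + π/4)), and let ψ₀ ∈ (0, π/4) be the unique solution of sin(2ψ₀) · ln(tan(ψ₀ + π/4)) = 1. Then H₀′(ψ) > 0 for all ψ ∈ (−ψ₀, ψ₀), H₀′(±ψ₀) = 0, and H₀′(ψ) < 0 for all ψ ∈ (−π/4, −ψ₀) ∪ (ψ₀, π/4). In particular, H₀ is strictly monotone on each of the three intervals, its only critical points in (−π/4, π/4) are ±ψ₀, and these critical points are non-degenerate extrema (a strict local maximum of H₀ at ψ₀ and a strict local minimum at −ψ₀). -/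
open Real

lemma H0aux_derivL (x : ℝ) (h1 : -(π/4) < x) (h2 : x < π/4) :
    HasDerivAt (fun y => Real.log (Real.tan (y + π / 4))) (2 / Real.cos (2 * x)) x := by
  have hc : 0 < Real.cos (x + π/4) := Real.cos_pos_of_mem_Ioo ⟨by linarith, by linarith⟩
  have hs : 0 < Real.sin (x + π/4) := Real.sin_pos_of_pos_of_lt_pi (by linarith) (by linarith)
  have hcc : Real.cos (2 * x) = 2 * Real.sin (x + π/4) * Real.cos (x + π/4) := by
    rw [← Real.sin_two_mul, ← Real.sin_add_pi_div_two]
    congr 1; ring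
  have ht : 0 < Real.tan (x + π/4) := by rw [Real.tan_eq_sin_div_cos]; positivity
  have h0 : HasDerivAt (fun y => Real.tan (y + π / 4)) (1 / Real.cos (x + π/4) ^ 2) x :=
    (Real.hasDerivAt_tan hc.ne').comp_add_const x (π/4)
  have h := h0.log ht.ne'
  refine h.congr_deriv ?_
  rw [hcc, Real.tan_eq_sin_div_cos]
  field_simp

lemma H0aux_odd (x : ℝ) :
    Real.log (Real.tan (-x + π / 4)) = - Real.log (Real.tan (x + π / 4)) := by
  rw [← Real.log_inv, ← Real.tan_pi_div_two_sub]
  congr 2; ring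

lemma H0aux_cos (x : ℝ) (h1 : -(π/4) < x) (h2 : x < π/4) : 0 < Real.cos (2 * x) :=
  Real.cos_pos_of_mem_Ioo ⟨by linarith, by linarith⟩

lemma H0aux_derivG (x : ℝ) (h1 : -(π/4) < x) (h2 : x < π/4) :
    HasDerivAt (fun y => Real.sin (2 * y) * Real.log (Real.tan (y + π / 4)))
      (2 * Real.cos (2 * x) * Real.log (Real.tan (x + π / 4))
        + 2 * Real.sin (2 * x) / Real.cos (2 * x)) x := by
  have hs := ((hasDerivAt_id x).const_mul 2).sin
  refine (hs.mul (H0aux_derivL x h1 h2)).congr_deriv ?_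
  simp only [id]
  ring

lemma H0aux_derivH (x : ℝ) (h1 : -(π/4) < x) (h2 : x < π/4) :
    HasDerivAt (fun y => 4 * Real.cos (2 * y) * Real.log (Real.tan (y + π / 4)))
      (8 * (1 - Real.sin (2 * x) * Real.log (Real.tan (x + π / 4)))) x := by
  have hs := (((hasDerivAt_id x).const_mul 2).cos).const_mul 4
  have hc := H0aux_cos x h1 h2
  refine (hs.mul (H0aux_derivL x h1 h2)).congr_deriv ?_
  simp only [id]
  field_simp
  ring

lemma H0aux_Lpos (x : ℝ) (h1 : 0 < x) (h2 : x < π/4) :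
    0 < Real.log (Real.tan (x + π / 4)) := by
  apply Real.log_pos
  rw [← Real.tan_pi_div_four]
  apply Real.tan_lt_tan_of_lt_of_lt_pi_div_two <;> linarith [Real.pi_pos]

lemma H0aux_Gderiv_pos (x : ℝ) (h1 : 0 < x) (h2 : x < π/4) :
    0 < 2 * Real.cos (2 * x) * Real.log (Real.tan (x + π / 4))
        + 2 * Real.sin (2 * x) / Real.cos (2 * x) := by
  have hc := H0aux_cos x (by linarith) h2
  have hL := H0aux_Lpos x h1 h2
  have hs : 0 < Real.sin (2 * x) := Real.sin_pos_of_pos_of_lt_pi (by linarith) (by linarith)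
  positivity

lemma H0aux_Gmono : StrictMonoOn
    (fun y => Real.sin (2 * y) * Real.log (Real.tan (y + π / 4))) (Set.Ico 0 (π/4)) := by
  apply strictMonoOn_of_deriv_pos (convex_Ico _ _)
  · intro x hx
    exact (H0aux_derivG x (by linarith [hx.1, hx.2]) hx.2).continuousAt.continuousWithinAt
  · intro x hx
    rw [interior_Ico] at hx
    rw [(H0aux_derivG x (by linarith [hx.1, hx.2]) hx.2).deriv]
    exact H0aux_Gderiv_pos x hx.1 hx.2

lemma H0aux_Gabs (x : ℝ) : Real.sin (2 * |x|) * Real.log (Real.tan (|x| + π / 4)) =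
    Real.sin (2 * x) * Real.log (Real.tan (x + π / 4)) := by
  rcases abs_choice x with h | h <;> rw [h]
  rw [H0aux_odd, mul_neg, mul_neg, Real.sin_neg]; ring

/-- Monotonicity structure of `H₀(ψ) = 4 cos(2ψ) ln(tan(ψ + π/4))` on `(−π/4, π/4)`:
with `ψ₀ ∈ (0, π/4)` the unique solution of `sin(2ψ₀) ln(tan(ψ₀ + π/4)) = 1`, the
derivative of `H₀` is positive on `(−ψ₀, ψ₀)`, vanishes at `±ψ₀`, and is negative on
`(−π/4, −ψ₀) ∪ (ψ₀, π/4)`; `H₀` is strictly monotone on each of the three intervals, and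
`±ψ₀` are non-degenerate extrema: a strict local maximum at `ψ₀` and a strict local
minimum at `−ψ₀`. -/
theorem H0_monotonicity (H₀ : ℝ → ℝ)
    (hH₀ : ∀ ψ, H₀ ψ = 4 * Real.cos (2 * ψ) * Real.log (Real.tan (ψ + π / 4)))
    (ψ₀ : ℝ) (hψ₀ : ψ₀ ∈ Set.Ioo 0 (π / 4))
    (hroot : Real.sin (2 * ψ₀) * Real.log (Real.tan (ψ₀ + π / 4)) = 1) :
    (∀ ψ ∈ Set.Ioo (-ψ₀) ψ₀, 0 < deriv H₀ ψ) ∧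
    deriv H₀ ψ₀ = 0 ∧ deriv H₀ (-ψ₀) = 0 ∧
    (∀ ψ, ψ ∈ Set.Ioo (-(π / 4)) (-ψ₀) ∪ Set.Ioo ψ₀ (π / 4) → deriv H₀ ψ < 0) ∧
    StrictMonoOn H₀ (Set.Icc (-ψ₀) ψ₀) ∧
    StrictAntiOn H₀ (Set.Ioc (-(π / 4)) (-ψ₀)) ∧
    StrictAntiOn H₀ (Set.Ico ψ₀ (π / 4)) ∧
    IsLocalMax H₀ ψ₀ ∧ IsLocalMin H₀ (-ψ₀) ∧
    deriv (deriv H₀) ψ₀ ≠ 0 ∧ deriv (deriv H₀) (-ψ₀) ≠ 0 := by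
  obtain rfl : H₀ = fun ψ => 4 * Real.cos (2 * ψ) * Real.log (Real.tan (ψ + π / 4)) := funext hH₀
  clear hH₀
  obtain ⟨hp, hq⟩ := hψ₀
  set H := fun ψ => 4 * Real.cos (2 * ψ) * Real.log (Real.tan (ψ + π / 4)) with hH
  have hd : ∀ x, -(π/4) < x → x < π/4 →
      deriv H x = 8 * (1 - Real.sin (2 * x) * Real.log (Real.tan (x + π / 4))) :=
    fun x h1 h2 => (H0aux_derivH x h1 h2).deriv
  have hcont : ∀ x, -(π/4) < x → x < π/4 → ContinuousAt H x :=
    fun x h1 h2 => (H0aux_derivH x h1 h2).continuousAt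
  have hpos : ∀ ψ ∈ Set.Ioo (-ψ₀) ψ₀, 0 < deriv H ψ := by
    intro x hx
    have ha : |x| < ψ₀ := abs_lt.2 hx
    have := H0aux_Gmono ⟨abs_nonneg x, ha.trans hq⟩ ⟨hp.le, hq⟩ ha
    simp only [H0aux_Gabs, hroot] at this
    rw [hd x (by linarith [hx.1]) (by linarith [hx.2])]
    linarith
  have hneg' : ∀ x, -(π/4) < x → x < π/4 → ψ₀ < |x| → deriv H x < 0 := by
    intro x h1 h2 ha
    have := H0aux_Gmono ⟨hp.le, hq⟩ ⟨abs_nonneg x, abs_lt.2 ⟨h1, h2⟩⟩ ha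
    simp only [H0aux_Gabs, hroot] at this
    rw [hd x h1 h2]
    linarith
  have hneg : ∀ ψ, ψ ∈ Set.Ioo (-(π / 4)) (-ψ₀) ∪ Set.Ioo ψ₀ (π / 4) → deriv H ψ < 0 := by
    rintro x (hx | hx)
    · exact hneg' x hx.1 (by linarith [hx.2]) (lt_abs.2 (Or.inr (by linarith [hx.2])))
    · exact hneg' x (by linarith [hx.1]) hx.2 (lt_abs.2 (Or.inl hx.1))
  have m1 : StrictMonoOn H (Set.Icc (-ψ₀) ψ₀) := by
    apply strictMonoOn_of_deriv_pos (convex_Icc _ _)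
    · intro x hx
      exact (hcont x (by linarith [hx.1]) (by linarith [hx.2])).continuousWithinAt
    · rw [interior_Icc]; exact hpos
  have m2 : StrictAntiOn H (Set.Ioc (-(π / 4)) (-ψ₀)) := by
    apply strictAntiOn_of_deriv_neg (convex_Ioc _ _)
    · intro x hx
      exact (hcont x (by linarith [hx.1]) (by linarith [hx.2])).continuousWithinAt
    · rw [interior_Ioc]; exact fun x hx => hneg x (Or.inl hx)
  have m3 : StrictAntiOn H (Set.Ico ψ₀ (π / 4)) := by
    apply strictAntiOn_of_deriv_neg (convex_Ico _ _)
    · intro x hx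
      exact (hcont x (by linarith [hx.1]) (by linarith [hx.2])).continuousWithinAt
    · rw [interior_Ico]; exact fun x hx => hneg x (Or.inr hx)
  have hdd : ∀ x, -(π/4) < x → x < π/4 → deriv (deriv H) x =
      8 * -(2 * Real.cos (2 * x) * Real.log (Real.tan (x + π / 4))
        + 2 * Real.sin (2 * x) / Real.cos (2 * x)) := by
    intro x h1 h2
    have he : deriv H =ᶠ[nhds x]
        fun x => 8 * (1 - Real.sin (2 * x) * Real.log (Real.tan (x + π / 4))) := by
      filter_upwards [Ioo_mem_nhds h1 h2] with y hy
      exact hd y hy.1 hy.2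
    rw [he.deriv_eq]
    exact (((H0aux_derivG x h1 h2).const_sub 1).const_mul 8).deriv
  have hG := H0aux_Gderiv_pos ψ₀ hp hq
  refine ⟨hpos, ?_, ?_, hneg, m1, m2, m3, ?_, ?_, ?_, ?_⟩
  · rw [hd _ (by linarith) hq, hroot]; norm_num
  · rw [hd _ (by linarith) (by linarith), ← H0aux_Gabs, abs_neg, H0aux_Gabs, hroot]; norm_num
  · exact isLocalMax_of_mono_anti (show -ψ₀ < ψ₀ by linarith) hq
      (m1.monotoneOn.mono Set.Ioc_subset_Icc_self) m3.antitoneOn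
  · exact isLocalMin_of_anti_mono (by linarith) (show -ψ₀ < ψ₀ by linarith)
      m2.antitoneOn (m1.monotoneOn.mono Set.Ico_subset_Icc_self)
  · rw [hdd _ (by linarith) hq]
    apply ne_of_lt
    linarith
  · rw [hdd _ (by linarith) (by linarith), H0aux_odd, mul_neg 2 ψ₀, Real.sin_neg, Real.cos_neg]
    apply ne_of_gt
    have : 2 * -Real.sin (2 * ψ₀) / Real.cos (2 * ψ₀) =
      -(2 * Real.sin (2 * ψ₀) / Real.cos (2 * ψ₀)) := by ring
    rw [this]
    linarith
end
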